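/- With the restricted ultrapower setup, if the ultrafilter U on P_𝔛 is complete, then M is an initial segment of N = ∏_𝔛 K / U (identifying K, and hence M, with its image under the canonical embedding), i.e., M ⊆_e N. -/

import Mathlib

/-!
Write an element of `N` below the class of the constant function `j a` as the class of some `f`.
Then `f i < j a` for `U`-almost all `i`, and since `M` is an initial segment of `K` each such value
is `j b` for a unique `b < a`. Sending `i` to this `b`, and to `a` when `f i` is not below `j a`,
defines `g : M → M` with range bounded by `a + 1`. Its graph is arithmetical in the graphs of
`ϱ ∘ f` and `ϱ ∘ j`, hence `g` is coded in `𝔛` (`codedFun_truncInv`). Completeness of `U` makes `g`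
constant on a set in `U`; on a common refinement with the set where `f i < j a`, the function `f`
is constantly `j b`, so `{i | f i = j b}`, which is in `𝔛` by comprehension (`fiber_mem`), is in `U`.

Passing from a definable relation to a coded graph requires that the Cantor pairing of `M` be
injective (`pairRel_inj`, from the ordered semiring axioms) and total (`exists_pairRel`, from
induction).
-/

namespace Paper

/-! ### Syntax of (second-order) arithmetic.

Terms of the language `L_A = {0, 1, +, ·, <}`, with number variables indexed by `ℕ`.
Formulas also allow atomic formulas `t ∈ X_k` (membership in a set variable) and
set quantifiers `allS`; first-order formulas are those avoiding both. -/

inductive PTerm where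
  | var : ℕ → PTerm
  | zero : PTerm
  | one : PTerm
  | add : PTerm → PTerm → PTerm
  | mul : PTerm → PTerm → PTerm

inductive Fml where
  | eq : PTerm → PTerm → Fml
  | lt : PTerm → PTerm → Fml
  | mem : PTerm → ℕ → Fml
  | not : Fml → Fml
  | imp : Fml → Fml → Fml
  | all : ℕ → Fml → Fml
  | allS : ℕ → Fml → Fml

def Fml.and (φ ψ : Fml) : Fml := .not (.imp φ (.not ψ))
def Fml.or (φ ψ : Fml) : Fml := .imp (.not φ) ψ
def Fml.iff (φ ψ : Fml) : Fml := (Fml.imp φ ψ).and (Fml.imp ψ φ)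
def Fml.ex (x : ℕ) (φ : Fml) : Fml := .not (.all x (.not φ))
def Fml.exS (k : ℕ) (φ : Fml) : Fml := .not (.allS k (.not φ))

/-- A structure for the language `{0, 1, +, ·, <}` on a carrier `M`
(bundled, so that several structures can live on the same carrier). -/
structure AStr (M : Type) where
  zero : M
  one : M
  add : M → M → M
  mul : M → M → M
  lt : M → M → Prop

/-- The standard model of arithmetic. -/
def natStr : AStr ℕ := ⟨0, 1, (· + ·), (· * ·), (· < ·)⟩

namespace PTerm

def vars : PTerm → Finset ℕ
  | var n => {n}
  | zero => ∅
  | one => ∅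
  | add t u => t.vars ∪ u.vars
  | mul t u => t.vars ∪ u.vars

/-- Substitution of a term `r` for the variable `x` (used only with `r` closed or
with `vars r ⊆ {x}`, in which case it is capture-free). -/
def subst (x : ℕ) (r : PTerm) : PTerm → PTerm
  | var n => if n = x then r else var n
  | zero => zero
  | one => one
  | add t u => add (subst x r t) (subst x r u)
  | mul t u => mul (subst x r t) (subst x r u)

def val {M : Type} (S : AStr M) (v : ℕ → M) : PTerm → M
  | var n => v n
  | zero => S.zero
  | one => S.one
  | add t u => S.add (t.val S v) (u.val S v)
  | mul t u => S.mul (t.val S v) (u.val S v)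

end PTerm

namespace Fml

/-- Free number variables. -/
def freeN : Fml → Finset ℕ
  | eq t u => t.vars ∪ u.vars
  | lt t u => t.vars ∪ u.vars
  | mem t _ => t.vars
  | not φ => φ.freeN
  | imp φ ψ => φ.freeN ∪ ψ.freeN
  | all x φ => φ.freeN.erase x
  | allS _ φ => φ.freeN

/-- Substitution of a term `r` for the (free) variable `x`. -/
def substN (x : ℕ) (r : PTerm) : Fml → Fml
  | eq t u => eq (PTerm.subst x r t) (PTerm.subst x r u)
  | lt t u => lt (PTerm.subst x r t) (PTerm.subst x r u)
  | mem t k => mem (PTerm.subst x r t) k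
  | not φ => not (substN x r φ)
  | imp φ ψ => imp (substN x r φ) (substN x r ψ)
  | all y φ => if y = x then all y φ else all y (substN x r φ)
  | allS k φ => allS k (substN x r φ)

/-- First-order formulas: no set variables, no set quantifiers. -/
def IsFO : Fml → Prop
  | eq _ _ => True
  | lt _ _ => True
  | mem _ _ => False
  | not φ => φ.IsFO
  | imp φ ψ => φ.IsFO ∧ ψ.IsFO
  | all _ φ => φ.IsFO
  | allS _ _ => False

/-- Arithmetical formulas: set variables allowed as parameters, but no set quantifiers. -/
def IsArith : Fml → Prop
  | eq _ _ => True
  | lt _ _ => True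
  | mem _ _ => True
  | not φ => φ.IsArith
  | imp φ ψ => φ.IsArith ∧ ψ.IsArith
  | all _ φ => φ.IsArith
  | allS _ _ => False

end Fml

/-! ### Satisfaction -/

/-- Satisfaction for a second-order structure `(M, 𝔛)`: number quantifiers range over `M`,
set quantifiers range over `𝔛`. -/
def Sat {M : Type} (S : AStr M) (𝔛 : Set (Set M)) : (ℕ → M) → (ℕ → Set M) → Fml → Prop
  | v, _, .eq t u => t.val S v = u.val S v
  | v, _, .lt t u => S.lt (t.val S v) (u.val S v)
  | v, w, .mem t k => t.val S v ∈ w k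
  | v, w, .not φ => ¬ Sat S 𝔛 v w φ
  | v, w, .imp φ ψ => Sat S 𝔛 v w φ → Sat S 𝔛 v w ψ
  | v, w, .all x φ => ∀ a : M, Sat S 𝔛 (Function.update v x a) w φ
  | v, w, .allS k φ => ∀ X ∈ 𝔛, Sat S 𝔛 v (Function.update w k X) φ

/-- First-order satisfaction. -/
def SatFO {M : Type} (S : AStr M) (v : ℕ → M) (φ : Fml) : Prop :=
  Sat S Set.univ v (fun _ => ∅) φ

/-- `M ⊨ T` for a first-order theory `T`. -/
def ModelsT {M : Type} (S : AStr M) (T : Set Fml) : Prop :=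
  ∀ φ ∈ T, ∀ v, SatFO S v φ

/-- Semantic consequence (equivalently, by the completeness theorem, provability). -/
def Proves (T : Set Fml) (φ : Fml) : Prop :=
  ∀ (M : Type) (S : AStr M), ModelsT S T → ∀ v, SatFO S v φ

/-- Consistency (equivalently, by the completeness theorem, having a model). -/
def ConsistentT (T : Set Fml) : Prop :=
  ∃ (M : Type) (S : AStr M), ModelsT S T

def IsFOSentence (φ : Fml) : Prop := φ.IsFO ∧ φ.freeN = ∅

/-- Completeness of a theory. -/
def CompleteT (T : Set Fml) : Prop :=
  ∀ φ, IsFOSentence φ → (Proves T φ ∨ Proves T φ.not)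

/-! ### Peano arithmetic -/

def numeral : ℕ → PTerm
  | 0 => .zero
  | n + 1 => .add (numeral n) .one

def univClosure (φ : Fml) : Fml := (φ.freeN.sort (· ≤ ·)).foldr Fml.all φ

/-- The induction axiom for `φ` in the variable `x` (before taking universal closure). -/
def indFml (φ : Fml) (x : ℕ) : Fml :=
  .imp ((φ.substN x .zero).and (.all x (.imp φ (φ.substN x (.add (.var x) .one)))))
    (.all x φ)

/-- The axioms of first-order Peano arithmetic `PA`. -/
def PAax : Set Fml :=
  {Fml.all 0 (.not (.eq (.add (.var 0) .one) .zero)),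
   Fml.all 0 (.all 1 (.imp (.eq (.add (.var 0) .one) (.add (.var 1) .one))
     (.eq (.var 0) (.var 1)))),
   Fml.all 0 (.eq (.add (.var 0) .zero) (.var 0)),
   Fml.all 0 (.all 1 (.eq (.add (.var 0) (.add (.var 1) .one))
     (.add (.add (.var 0) (.var 1)) .one))),
   Fml.all 0 (.eq (.mul (.var 0) .zero) .zero),
   Fml.all 0 (.all 1 (.eq (.mul (.var 0) (.add (.var 1) .one))
     (.add (.mul (.var 0) (.var 1)) (.var 0)))),
   Fml.all 0 (.all 1 (Fml.iff (.lt (.var 0) (.var 1))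
     (Fml.ex 2 (.eq (.add (.var 0) (.add (.var 2) .one)) (.var 1)))))} ∪
  {ψ | ∃ φ x, Fml.IsFO φ ∧ ψ = univClosure (indFml φ x)}

/-! ### Gödel coding -/

/-- The Cantor pairing function (the canonical pairing `⟨·,·⟩`). -/
def cpair (a b : ℕ) : ℕ := (a + b) * (a + b + 1) / 2 + a

def PTerm.code : PTerm → ℕ
  | .var n => cpair 0 n
  | .zero => cpair 1 0
  | .one => cpair 2 0
  | .add t u => cpair 3 (cpair t.code u.code)
  | .mul t u => cpair 4 (cpair t.code u.code)

def Fml.code : Fml → ℕ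
  | .eq t u => cpair 5 (cpair t.code u.code)
  | .lt t u => cpair 6 (cpair t.code u.code)
  | .not φ => cpair 7 φ.code
  | .imp φ ψ => cpair 8 (cpair φ.code ψ.code)
  | .all x φ => cpair 9 (cpair x φ.code)
  | .mem t k => cpair 10 (cpair t.code k)
  | .allS k φ => cpair 11 (cpair k φ.code)

/-- A theory identified with its set of Gödel codes. -/
def theoryCode (T : Set Fml) : Set ℕ := Fml.code '' T

/-! ### The arithmetical hierarchy (syntactic classes) -/

inductive IsDelta0 : Fml → Prop
  | eq (t u) : IsDelta0 (.eq t u)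
  | lt (t u) : IsDelta0 (.lt t u)
  | mem (t k) : IsDelta0 (.mem t k)
  | not {φ} : IsDelta0 φ → IsDelta0 φ.not
  | imp {φ ψ} : IsDelta0 φ → IsDelta0 ψ → IsDelta0 (φ.imp ψ)
  | ball {φ} (x t) : x ∉ PTerm.vars t → IsDelta0 φ →
      IsDelta0 (.all x (.imp (.lt (.var x) t) φ))

def IsSigma01 (φ : Fml) : Prop := ∃ x ψ, IsDelta0 ψ ∧ φ = Fml.ex x ψ

def IsPi01 (φ : Fml) : Prop := ∃ x ψ, IsDelta0 ψ ∧ φ = Fml.all x ψ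

/-! ### Subsystems of second-order arithmetic, semantically -/

/-- The basic axioms (`PA⁻`, a discretely ordered commutative semiring). -/
def PAminusSem {M : Type} (S : AStr M) : Prop :=
  (∀ a b c : M, S.add a (S.add b c) = S.add (S.add a b) c) ∧
  (∀ a b : M, S.add a b = S.add b a) ∧
  (∀ a b c : M, S.mul a (S.mul b c) = S.mul (S.mul a b) c) ∧
  (∀ a b : M, S.mul a b = S.mul b a) ∧
  (∀ a b c : M, S.mul a (S.add b c) = S.add (S.mul a b) (S.mul a c)) ∧
  (∀ a : M, S.add a S.zero = a) ∧
  (∀ a : M, S.mul a S.zero = S.zero) ∧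
  (∀ a : M, S.mul a S.one = a) ∧
  (∀ a b c : M, S.lt a b → S.lt b c → S.lt a c) ∧
  (∀ a : M, ¬ S.lt a a) ∧
  (∀ a b : M, S.lt a b ∨ a = b ∨ S.lt b a) ∧
  (∀ a b c : M, S.lt a b → S.lt (S.add a c) (S.add b c)) ∧
  (∀ a b c : M, S.lt S.zero c → S.lt a b → S.lt (S.mul a c) (S.mul b c)) ∧
  (∀ a b : M, S.lt a b → ∃ c : M, S.add a c = b) ∧
  S.lt S.zero S.one ∧
  (∀ a : M, S.lt S.zero a → a = S.one ∨ S.lt S.one a) ∧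
  (∀ a : M, a = S.zero ∨ S.lt S.zero a)

/-- `(M,𝔛)` satisfies the induction axiom for `φ` in the variable `x`
(with arbitrary number and set parameters). -/
def SatInd {M : Type} (S : AStr M) (𝔛 : Set (Set M)) (φ : Fml) (x : ℕ) : Prop :=
  ∀ (v : ℕ → M) (w : ℕ → Set M), (∀ k, w k ∈ 𝔛) →
    (Sat S 𝔛 (Function.update v x S.zero) w φ ∧
      ∀ a, Sat S 𝔛 (Function.update v x a) w φ →
        Sat S 𝔛 (Function.update v x (S.add a S.one)) w φ) →
    ∀ a, Sat S 𝔛 (Function.update v x a) w φ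

/-- `(M,𝔛) ⊨ RCA₀`: basic axioms, `Σ⁰₁` induction and `Δ⁰₁` comprehension. -/
def SatRCA0 {M : Type} (S : AStr M) (𝔛 : Set (Set M)) : Prop :=
  PAminusSem S ∧
  (∀ φ x, IsSigma01 φ → SatInd S 𝔛 φ x) ∧
  (∀ φ ψ x, IsSigma01 φ → IsPi01 ψ →
    ∀ (v : ℕ → M) (w : ℕ → Set M), (∀ k, w k ∈ 𝔛) →
      (∀ a, Sat S 𝔛 (Function.update v x a) w φ ↔ Sat S 𝔛 (Function.update v x a) w ψ) →
      {a : M | Sat S 𝔛 (Function.update v x a) w φ} ∈ 𝔛)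

/-- `(M,𝔛) ⊨ ACA₀`: basic axioms, the induction axiom and arithmetical comprehension. -/
def SatACA0 {M : Type} (S : AStr M) (𝔛 : Set (Set M)) : Prop :=
  PAminusSem S ∧
  (∀ X ∈ 𝔛, S.zero ∈ X → (∀ a, a ∈ X → S.add a S.one ∈ X) → ∀ a, a ∈ X) ∧
  (∀ φ x, Fml.IsArith φ → ∀ (v : ℕ → M) (w : ℕ → Set M), (∀ k, w k ∈ 𝔛) →
    {a : M | Sat S 𝔛 (Function.update v x a) w φ} ∈ 𝔛)

/-! ### Arithmetization inside a model

All notions below unfold the standard (`Δ₀`/`Σ₁`) arithmetized definitions at the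
meta-level, using the operations of a structure `S : AStr M`.  On models of `IΣ₁`
they agree with satisfaction of the corresponding arithmetic formulas. -/

namespace AStr

variable {M : Type} (S : AStr M)

/-- Interpretation of numerals. -/
def num : ℕ → M
  | 0 => S.zero
  | n + 1 => S.add (num n) S.one

def le (a b : M) : Prop := S.lt a b ∨ a = b

def two : M := S.add S.one S.one

/-- `p = ⟨a,b⟩` for the Cantor pairing function: `2p = (a+b)(a+b+1) + 2a`. -/
def PairRel (p a b : M) : Prop :=
  S.mul S.two p = S.add (S.mul (S.add a b) (S.add (S.add a b) S.one)) (S.mul S.two a)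

/-- `r = a mod m`. -/
def ModRel (a m r : M) : Prop := S.lt r m ∧ ∃ q, a = S.add (S.mul q m) r

/-- Gödel's β-function: `x = β(c, i)` where `c = ⟨a,b⟩` and `x = a mod (1 + (i+1)b)`. -/
def BetaRel (c i x : M) : Prop :=
  ∃ a b, S.PairRel c a b ∧ S.ModRel a (S.add S.one (S.mul (S.add i S.one) b)) x

/-- `s` codes a sequence of length `l` (as `s = ⟨c, l⟩`). -/
def SeqLen (s l : M) : Prop := ∃ c, S.PairRel s c l

/-- The `i`-th entry of the sequence coded by `s` is `x`. -/
def SeqAt (s i x : M) : Prop := ∃ c l, S.PairRel s c l ∧ S.lt i l ∧ S.BetaRel c i x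

/-- The fixed `Δ₀` coding formula `x ∈ y` for (bounded) sets:
`y = ⟨a,b⟩` and `a mod (1 + (x+1)b) = 1` with modulus `> 1`, and `x < y`. -/
def MemRel (x y : M) : Prop :=
  S.lt x y ∧ ∃ a b, S.PairRel y a b ∧
    S.lt S.one (S.add S.one (S.mul (S.add x S.one) b)) ∧
    S.ModRel a (S.add S.one (S.mul (S.add x S.one) b)) S.one

/-- Tagged pairs, used for codes of syntax: `x = ⟨tag, payload⟩`. -/
def Node (x tag payload : M) : Prop := S.PairRel x tag payload

/-- `x` is the code of the variable `v`. -/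
def VarC (v x : M) : Prop := S.Node x (S.num 0) v

def AddC (t u y : M) : Prop := ∃ p, S.PairRel p t u ∧ S.Node y (S.num 3) p
def MulC (t u y : M) : Prop := ∃ p, S.PairRel p t u ∧ S.Node y (S.num 4) p
def EqC (t u y : M) : Prop := ∃ p, S.PairRel p t u ∧ S.Node y (S.num 5) p
def LtC (t u y : M) : Prop := ∃ p, S.PairRel p t u ∧ S.Node y (S.num 6) p
def NotC (x y : M) : Prop := S.Node y (S.num 7) x
def ImpC (x y z : M) : Prop := ∃ p, S.PairRel p x y ∧ S.Node z (S.num 8) p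
def AllC (v x y : M) : Prop := ∃ p, S.PairRel p v x ∧ S.Node y (S.num 9) p

/-- `s` codes a construction sequence for terms. -/
def IsTermConSeq (s : M) : Prop :=
  ∀ i x, S.SeqAt s i x →
    (∃ v, S.VarC v x) ∨ S.Node x (S.num 1) (S.num 0) ∨ S.Node x (S.num 2) (S.num 0) ∨
    (∃ j k y z, S.lt j i ∧ S.lt k i ∧ S.SeqAt s j y ∧ S.SeqAt s k z ∧
      (S.AddC y z x ∨ S.MulC y z x))

/-- `x` is a term code (in the sense of `M`, possibly nonstandard). -/
def TermCodeM (x : M) : Prop := ∃ s i, S.IsTermConSeq s ∧ S.SeqAt s i x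

/-- `s` codes a construction sequence for (first-order) formulas. -/
def IsFmlConSeq (s : M) : Prop :=
  ∀ i x, S.SeqAt s i x →
    (∃ t u, S.TermCodeM t ∧ S.TermCodeM u ∧ (S.EqC t u x ∨ S.LtC t u x)) ∨
    (∃ j y, S.lt j i ∧ S.SeqAt s j y ∧ S.NotC y x) ∨
    (∃ j k y z, S.lt j i ∧ S.lt k i ∧ S.SeqAt s j y ∧ S.SeqAt s k z ∧ S.ImpC y z x) ∨
    (∃ j v y, S.lt j i ∧ S.SeqAt s j y ∧ S.AllC v y x)

/-- `x` is a formula code (in the sense of `M`, possibly nonstandard). -/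
def FmlCodeM (x : M) : Prop := ∃ s i, S.IsFmlConSeq s ∧ S.SeqAt s i x

/-- Construction sequences of pairs (term code, occurrence flag for the variable `v`). -/
def IsOccConSeq (v s : M) : Prop :=
  ∀ i p, S.SeqAt s i p → ∃ x f, S.PairRel p x f ∧
    ((S.VarC v x ∧ f = S.num 1) ∨
     (∃ u, S.VarC u x ∧ u ≠ v ∧ f = S.num 0) ∨
     ((S.Node x (S.num 1) (S.num 0) ∨ S.Node x (S.num 2) (S.num 0)) ∧ f = S.num 0) ∨
     (∃ j k y z g h pj pk, S.lt j i ∧ S.lt k i ∧ S.SeqAt s j pj ∧ S.SeqAt s k pk ∧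
       S.PairRel pj y g ∧ S.PairRel pk z h ∧ (S.AddC y z x ∨ S.MulC y z x) ∧
       ((f = S.num 1 ∧ (g = S.num 1 ∨ h = S.num 1)) ∨
        (f = S.num 0 ∧ g = S.num 0 ∧ h = S.num 0))))

/-- `f = 1` iff the variable `v` occurs in the term coded by `t` (`f ∈ {0,1}`). -/
def OccT (v t f : M) : Prop :=
  ∃ s i p, S.IsOccConSeq v s ∧ S.SeqAt s i p ∧ S.PairRel p t f

/-- Construction sequences of pairs (formula code, freeness flag for the variable `v`). -/
def IsFreeConSeq (v s : M) : Prop :=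
  ∀ i p, S.SeqAt s i p → ∃ x f, S.PairRel p x f ∧
    ((∃ t u, (S.EqC t u x ∨ S.LtC t u x) ∧
       ((f = S.num 1 ∧ (S.OccT v t (S.num 1) ∨ S.OccT v u (S.num 1))) ∨
        (f = S.num 0 ∧ S.OccT v t (S.num 0) ∧ S.OccT v u (S.num 0)))) ∨
     (∃ j y g pj, S.lt j i ∧ S.SeqAt s j pj ∧ S.PairRel pj y g ∧ S.NotC y x ∧ f = g) ∨
     (∃ j k y z g h pj pk, S.lt j i ∧ S.lt k i ∧ S.SeqAt s j pj ∧ S.SeqAt s k pk ∧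
       S.PairRel pj y g ∧ S.PairRel pk z h ∧ S.ImpC y z x ∧
       ((f = S.num 1 ∧ (g = S.num 1 ∨ h = S.num 1)) ∨
        (f = S.num 0 ∧ g = S.num 0 ∧ h = S.num 0))) ∨
     (∃ j w y g pj, S.lt j i ∧ S.SeqAt s j pj ∧ S.PairRel pj y g ∧ S.AllC w y x ∧
       ((w = v ∧ f = S.num 0) ∨ (w ≠ v ∧ f = g))))

/-- `f = 1` iff the variable `v` is free in the formula coded by `φ`. -/
def FreeF (v φ f : M) : Prop :=
  ∃ s i p, S.IsFreeConSeq v s ∧ S.SeqAt s i p ∧ S.PairRel p φ f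

/-- Construction sequences of pairs (term code, result of substituting `t` for `v`). -/
def IsSubTConSeq (v t s : M) : Prop :=
  ∀ i p, S.SeqAt s i p → ∃ x x', S.PairRel p x x' ∧
    ((S.VarC v x ∧ x' = t) ∨
     (∃ u, S.VarC u x ∧ u ≠ v ∧ x' = x) ∨
     ((S.Node x (S.num 1) (S.num 0) ∨ S.Node x (S.num 2) (S.num 0)) ∧ x' = x) ∨
     (∃ j k y z y' z' pj pk, S.lt j i ∧ S.lt k i ∧ S.SeqAt s j pj ∧ S.SeqAt s k pk ∧
       S.PairRel pj y y' ∧ S.PairRel pk z z' ∧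
       ((S.AddC y z x ∧ S.AddC y' z' x') ∨ (S.MulC y z x ∧ S.MulC y' z' x'))))

/-- Substitution of the term (code) `t` for the variable `v` in terms: `x' = x[t/v]`. -/
def SubT (v t x x' : M) : Prop :=
  ∃ s i p, S.IsSubTConSeq v t s ∧ S.SeqAt s i p ∧ S.PairRel p x x'

/-- Construction sequences for capture-free substitution in formulas. -/
def IsSubFConSeq (v t s : M) : Prop :=
  ∀ i p, S.SeqAt s i p → ∃ x x', S.PairRel p x x' ∧
    ((∃ a b a' b', S.SubT v t a a' ∧ S.SubT v t b b' ∧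
       ((S.EqC a b x ∧ S.EqC a' b' x') ∨ (S.LtC a b x ∧ S.LtC a' b' x'))) ∨
     (∃ j y y' pj, S.lt j i ∧ S.SeqAt s j pj ∧ S.PairRel pj y y' ∧
       S.NotC y x ∧ S.NotC y' x') ∨
     (∃ j k y z y' z' pj pk, S.lt j i ∧ S.lt k i ∧ S.SeqAt s j pj ∧ S.SeqAt s k pk ∧
       S.PairRel pj y y' ∧ S.PairRel pk z z' ∧ S.ImpC y z x ∧ S.ImpC y' z' x') ∨
     (∃ w y, S.AllC w y x ∧
       ((w = v ∧ x' = x) ∨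
        (w ≠ v ∧ (S.OccT w t (S.num 0) ∨ S.FreeF v y (S.num 0)) ∧
          ∃ j y' pj, S.lt j i ∧ S.SeqAt s j pj ∧ S.PairRel pj y y' ∧ S.AllC w y' x'))))

/-- Capture-free substitution in formulas: `x' = x[t/v]`, with `t` substitutable for `v`. -/
def SubF (v t x x' : M) : Prop :=
  ∃ s i p, S.IsSubFConSeq v t s ∧ S.SeqAt s i p ∧ S.PairRel p x x'

/-- `x` is (the code of) a generalization `∀v₁ ⋯ ∀vₖ y` of `y`. -/
def GenOf (y x : M) : Prop :=
  ∃ s i, S.SeqAt s (S.num 0) y ∧ S.SeqAt s i x ∧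
    ∀ j z z', S.SeqAt s j z → S.SeqAt s (S.add j S.one) z' → S.le (S.add j S.one) i →
      ∃ v, S.AllC v z z'

/-- Codes of instances of the logical axiom schemes (a Hilbert-style calculus with
modus ponens as the only rule; axioms are taken together with their generalizations). -/
def LogAxCore (x : M) : Prop :=
  -- A1 : a → (b → a)
  (∃ a b y, S.FmlCodeM a ∧ S.FmlCodeM b ∧ S.ImpC b a y ∧ S.ImpC a y x) ∨
  -- A2 : (a → (b → c)) → ((a → b) → (a → c))
  (∃ a b c bc abc ab ac r, S.FmlCodeM a ∧ S.FmlCodeM b ∧ S.FmlCodeM c ∧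
    S.ImpC b c bc ∧ S.ImpC a bc abc ∧ S.ImpC a b ab ∧ S.ImpC a c ac ∧
    S.ImpC ab ac r ∧ S.ImpC abc r x) ∨
  -- A3 : (¬b → ¬a) → (a → b)
  (∃ a b na nb l r, S.FmlCodeM a ∧ S.FmlCodeM b ∧ S.NotC a na ∧ S.NotC b nb ∧
    S.ImpC nb na l ∧ S.ImpC a b r ∧ S.ImpC l r x) ∨
  -- A4 : ∀v a → a[t/v]
  (∃ v t a a' al, S.TermCodeM t ∧ S.FmlCodeM a ∧ S.AllC v a al ∧ S.SubF v t a a' ∧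
    S.ImpC al a' x) ∨
  -- A5 : ∀v (a → b) → (∀v a → ∀v b)
  (∃ v a b ab alab ala alb r, S.FmlCodeM a ∧ S.FmlCodeM b ∧ S.ImpC a b ab ∧
    S.AllC v ab alab ∧ S.AllC v a ala ∧ S.AllC v b alb ∧ S.ImpC ala alb r ∧
    S.ImpC alab r x) ∨
  -- A6 : a → ∀v a, for v not free in a
  (∃ v a ala, S.FmlCodeM a ∧ S.FreeF v a (S.num 0) ∧ S.AllC v a ala ∧ S.ImpC a ala x) ∨
  -- E1 : t = t
  (∃ t, S.TermCodeM t ∧ S.EqC t t x) ∨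
  -- E2 : u = w → w = u (variables)
  (∃ u w vu vw e1 e2, S.VarC u vu ∧ S.VarC w vw ∧ S.EqC vu vw e1 ∧ S.EqC vw vu e2 ∧
    S.ImpC e1 e2 x) ∨
  -- E3 : u = w → (w = z → u = z) (variables)
  (∃ u w z vu vw vz e1 e2 e3 r, S.VarC u vu ∧ S.VarC w vw ∧ S.VarC z vz ∧
    S.EqC vu vw e1 ∧ S.EqC vw vz e2 ∧ S.EqC vu vz e3 ∧ S.ImpC e2 e3 r ∧ S.ImpC e1 r x) ∨
  -- E4 : congruence of +, ·, < with respect to = (variables)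
  (∃ u1 w1 u2 w2 a1 b1 a2 b2 e1 e2 s1 s2 es r,
    S.VarC u1 a1 ∧ S.VarC w1 b1 ∧ S.VarC u2 a2 ∧ S.VarC w2 b2 ∧
    S.EqC a1 b1 e1 ∧ S.EqC a2 b2 e2 ∧
    ((S.AddC a1 a2 s1 ∧ S.AddC b1 b2 s2 ∧ S.EqC s1 s2 es) ∨
     (S.MulC a1 a2 s1 ∧ S.MulC b1 b2 s2 ∧ S.EqC s1 s2 es) ∨
     (S.LtC a1 a2 s1 ∧ S.LtC b1 b2 s2 ∧ S.ImpC s1 s2 es)) ∧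
    S.ImpC e2 es r ∧ S.ImpC e1 r x) ∨
  -- E5 : congruence of = (variables)
  (∃ u1 w1 u2 w2 a1 b1 a2 b2 e1 e2 d1 d2 inner r,
    S.VarC u1 a1 ∧ S.VarC w1 b1 ∧ S.VarC u2 a2 ∧ S.VarC w2 b2 ∧
    S.EqC a1 b1 e1 ∧ S.EqC a2 b2 e2 ∧ S.EqC a1 a2 d1 ∧ S.EqC b1 b2 d2 ∧
    S.ImpC d1 d2 inner ∧ S.ImpC e2 inner r ∧ S.ImpC e1 r x)

/-- Logical axioms: generalizations of instances of the axiom schemes. -/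
def LogAx (x : M) : Prop := ∃ y, S.LogAxCore y ∧ S.GenOf y x

/-- `s` codes a proof of `φ` from the set `Γ ⊆ M` of (codes of) sentences:
every entry is a logical axiom, a member of `Γ`, or follows by modus ponens. -/
def ProofFrom (Γ : Set M) (s φ : M) : Prop :=
  (∃ i, S.SeqAt s i φ) ∧
  ∀ i x, S.SeqAt s i x →
    S.LogAx x ∨ x ∈ Γ ∨
    (∃ j k y z, S.lt j i ∧ S.lt k i ∧ S.SeqAt s j y ∧ S.SeqAt s k z ∧ S.ImpC y x z)

/-- Provability (in the sense of `M`) from the axiom set `Γ ⊆ M`. -/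
def ProvFrom (Γ : Set M) (φ : M) : Prop := ∃ s, S.ProofFrom Γ s φ

/-- `M ⊨ Con_Γ` : there is no (possibly nonstandard) proof of a contradiction from `Γ`. -/
def ConOf (Γ : Set M) : Prop :=
  ¬ ∃ φ nφ, S.NotC φ nφ ∧ S.ProvFrom Γ φ ∧ S.ProvFrom Γ nφ

/-- `M ⊨ Con_T` for a (standard) theory `T`: `M` thinks every finite subtheory
of `T` is consistent. -/
def SatConTheory (T : Set Fml) : Prop :=
  ∀ F : Finset Fml, ↑F ⊆ T → S.ConOf {x : M | ∃ φ ∈ F, x = S.num (Fml.code φ)}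

/-! ### Coded sets, standard systems, filters on `P_𝔛` -/

/-- `A` is unbounded in `M`. -/
def Unb (A : Set M) : Prop := ∀ b, ∃ a ∈ A, S.lt b a

/-- `P_𝔛`: the collection of unbounded sets in `𝔛` (a partial order under `⊆`). -/
def PX (𝔛 : Set (Set M)) : Set (Set M) := {A | A ∈ 𝔛 ∧ S.Unb A}

/-- The `a`-th slice `(A)_a = {b | ⟨a,b⟩ ∈ A}`. -/
def SliceAt (A : Set M) (a : M) : Set M := {b | ∃ p, S.PairRel p a b ∧ p ∈ A}

/-- A function `M → M` is coded in `𝔛` if its graph (via the canonical pairing)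
belongs to `𝔛`. -/
def CodedFun (𝔛 : Set (Set M)) (f : M → M) : Prop :=
  ∃ G ∈ 𝔛, ∀ a b, f a = b ↔ b ∈ S.SliceAt G a

/-- A family `F` of sets is definable (over `(M,𝔛)`) if `{a | (A)_a ∈ F} ∈ 𝔛`
for every `A ∈ 𝔛`. -/
def DefinableFam (𝔛 F : Set (Set M)) : Prop :=
  ∀ A ∈ 𝔛, {a : M | S.SliceAt A a ∈ F} ∈ 𝔛

/-- `F` is a complete family: every function coded in `𝔛` with bounded range is
constant on some member of `F`. -/
def CompleteOn (𝔛 F : Set (Set M)) : Prop :=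
  ∀ f : M → M, S.CodedFun 𝔛 f → (∃ b, ∀ a, S.lt (f a) b) →
    ∃ A ∈ F, ∀ x ∈ A, ∀ y ∈ A, f x = f y

/-- The standard system `SSy(M)`: standard parts of the `M`-coded sets. -/
def SSy : Set (Set ℕ) := {A | ∃ c : M, ∀ n : ℕ, (n ∈ A ↔ S.MemRel (S.num n) c)}

/-- `M` is nonstandard. -/
def Nonstd : Prop := ∃ a : M, ∀ n : ℕ, a ≠ S.num n

/-- `M` is recursively saturated: every recursive type (in the variable `0`, with
finitely many parameters assigned to the variables `1, …, k`) that is finitely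
realized in `M` is realized in `M`. -/
def RecSat : Prop :=
  ∀ (p : Set Fml) (k : ℕ) (par : ℕ → M),
    (∀ φ ∈ p, Fml.IsFO φ ∧ φ.freeN ⊆ Finset.range (k + 1)) →
    ComputablePred (fun n => ∃ φ ∈ p, Fml.code φ = n) →
    (∀ F : Finset Fml, ↑F ⊆ p →
      ∃ a : M, ∀ φ ∈ F, SatFO S (fun i => if i = 0 then a else par i) φ) →
    ∃ a : M, ∀ φ ∈ p, SatFO S (fun i => if i = 0 then a else par i) φ

/-- `c` is the least code of the (bounded) set `A`. -/
def IsLeastCode (A : Set M) (c : M) : Prop :=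
  (∀ x, S.MemRel x c ↔ x ∈ A) ∧ ∀ c', (∀ x, S.MemRel x c' ↔ x ∈ A) → S.le c c'

/-- `A* = {⟨A ∩ I_{<a}⟩ | a ∈ M}`, the set of least codes of initial segments of `A`. -/
def star (A : Set M) : Set M :=
  {c | ∃ a, S.IsLeastCode (A ∩ {b | S.lt b a}) c}

end AStr

/-! ### Filters and partial orders of sets -/

/-- A filter on a partial order `P` of sets, ordered by inclusion: a proper, nonempty,
upward closed, downward directed subset of `P`. -/
def IsFilterOn {α : Type} (P F : Set (Set α)) : Prop :=
  F ⊆ P ∧ F.Nonempty ∧ F ≠ P ∧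
  (∀ A ∈ F, ∀ B ∈ P, A ⊆ B → B ∈ F) ∧
  (∀ A ∈ F, ∀ B ∈ F, ∃ C ∈ F, C ⊆ A ∧ C ⊆ B)

/-- An ultrafilter on a partial order of sets: a maximal filter. -/
def IsUltraOn {α : Type} (P U : Set (Set α)) : Prop :=
  IsFilterOn P U ∧ ∀ F, IsFilterOn P F → U ⊆ F → F = U

/-- A principal filter on a partial order of sets. -/
def IsPrincipalOn {α : Type} (P U : Set (Set α)) : Prop :=
  ∃ A ∈ P, U = {B | B ∈ P ∧ A ⊆ B}

/-- The countable chain condition for a partial order `P` of sets (ordered by `⊆`):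
every uncountable subset contains two distinct compatible elements. -/
def CCCOn {α : Type} (P : Set (Set α)) : Prop :=
  ∀ A : Set (Set α), A ⊆ P → ¬A.Countable →
    ∃ X ∈ A, ∃ Y ∈ A, X ≠ Y ∧ ∃ Z ∈ P, Z ⊆ X ∧ Z ⊆ Y

/-- `𝔛` is a Boolean algebra of sets. -/
def IsBoolAlg {α : Type} (𝔛 : Set (Set α)) : Prop :=
  Set.univ ∈ 𝔛 ∧ ∅ ∈ 𝔛 ∧
  (∀ A ∈ 𝔛, ∀ B ∈ 𝔛, A ∪ B ∈ 𝔛) ∧ (∀ A ∈ 𝔛, ∀ B ∈ 𝔛, A ∩ B ∈ 𝔛) ∧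
  (∀ A ∈ 𝔛, Aᶜ ∈ 𝔛)

/-- A filter on the Boolean algebra `𝔛`. -/
def IsBAFilter {α : Type} (𝔛 F : Set (Set α)) : Prop :=
  F ⊆ 𝔛 ∧ F.Nonempty ∧ ∅ ∉ F ∧
  (∀ A ∈ F, ∀ B ∈ 𝔛, A ⊆ B → B ∈ F) ∧
  (∀ A ∈ F, ∀ B ∈ F, A ∩ B ∈ F)

/-- An ultrafilter on the Boolean algebra `𝔛`: a maximal filter. -/
def IsBAUltra {α : Type} (𝔛 F : Set (Set α)) : Prop :=
  IsBAFilter 𝔛 F ∧ ∀ G, IsBAFilter 𝔛 G → F ⊆ G → G = F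

/-! ### Scott sets -/

/-- Oracle partial recursive functions: partial recursive in the oracle `O`. -/
inductive RecursiveIn (O : ℕ →. ℕ) : (ℕ →. ℕ) → Prop
  | oracle : RecursiveIn O O
  | zero : RecursiveIn O (pure 0)
  | succ : RecursiveIn O Nat.succ
  | left : RecursiveIn O ↑fun n : ℕ => n.unpair.1
  | right : RecursiveIn O ↑fun n : ℕ => n.unpair.2
  | pair {f g} : RecursiveIn O f → RecursiveIn O g →
      RecursiveIn O fun n => Nat.pair <$> f n <*> g n
  | comp {f g} : RecursiveIn O f → RecursiveIn O g →
      RecursiveIn O fun n => g n >>= f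
  | prec {f g} : RecursiveIn O f → RecursiveIn O g →
      RecursiveIn O (Nat.unpaired fun a n =>
        n.rec (f a) fun y IH => do let i ← IH; g (Nat.pair a (Nat.pair y i)))
  | rfind {f} : RecursiveIn O f →
      RecursiveIn O fun a => Nat.rfind fun n => (fun m => m = 0) <$> f (Nat.pair a n)

/-- The characteristic function of a set of natural numbers. -/
noncomputable def chi (A : Set ℕ) : ℕ →. ℕ :=
  fun n => Part.some (@ite _ (n ∈ A) (Classical.propDecidable _) 1 0)

/-- Turing reducibility: `B ≤_T A`. -/
def TuringLe (B A : Set ℕ) : Prop := RecursiveIn (chi A) (chi B)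

/-- A set of naturals coding a binary tree (codes of finite binary strings,
closed under initial segments). -/
def IsTreeCode (T : Set ℕ) : Prop :=
  (∀ n ∈ T, ∃ l : List Bool, Encodable.encode l = n) ∧
  (∀ l₁ l₂ : List Bool, l₁ <+: l₂ → Encodable.encode l₂ ∈ T → Encodable.encode l₁ ∈ T)

/-- `B` (as the characteristic function of a branch) is an infinite branch of the
binary tree coded by `T`. -/
def IsBranchThrough (B T : Set ℕ) : Prop :=
  ∀ n : ℕ, ∃ l : List Bool, l.length = n ∧
    (∀ i : Fin l.length, (l.get i = true ↔ (i : ℕ) ∈ B)) ∧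
    Encodable.encode l ∈ T

/-- A Scott set: a nonempty Boolean algebra of subsets of `ω` closed under relative
recursion and containing an infinite branch of every infinite binary tree coded in it. -/
def IsScottSet (𝔛 : Set (Set ℕ)) : Prop :=
  𝔛.Nonempty ∧
  (∀ A ∈ 𝔛, ∀ B ∈ 𝔛, A ∪ B ∈ 𝔛) ∧
  (∀ A ∈ 𝔛, Aᶜ ∈ 𝔛) ∧
  (∀ A ∈ 𝔛, ∀ B : Set ℕ, TuringLe B A → B ∈ 𝔛) ∧
  (∀ T ∈ 𝔛, IsTreeCode T → T.Infinite → ∃ B ∈ 𝔛, IsBranchThrough B T)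

/-- The sets represented in the theory `T`. -/
def repSet (T : Set Fml) : Set (Set ℕ) :=
  {A | ∃ φ : Fml, Fml.IsFO φ ∧ φ.freeN ⊆ {0} ∧
    ∀ n : ℕ, (n ∈ A → Proves T (φ.substN 0 (numeral n))) ∧
      (n ∉ A → Proves T (Fml.not (φ.substN 0 (numeral n))))}

/-- Martin's axiom. -/
def MartinsAxiom : Prop :=
  ∀ (P : Type) (_ : PartialOrder P),
    (∀ A : Set P, ¬A.Countable → ∃ x ∈ A, ∃ y ∈ A, x ≠ y ∧ ∃ z, z ≤ x ∧ z ≤ y) →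
    ∀ 𝒟 : Set (Set P), (∀ D ∈ 𝒟, ∀ x : P, ∃ y ∈ D, y ≤ x) →
      Cardinal.mk 𝒟 < Cardinal.continuum →
      ∃ F : Set P, F.Nonempty ∧ (∀ x ∈ F, ∀ y, x ≤ y → y ∈ F) ∧
        (∀ x ∈ F, ∀ y ∈ F, ∃ z ∈ F, z ≤ x ∧ z ≤ y) ∧
        ∀ D ∈ 𝒟, (F ∩ D).Nonempty

/-! ### Arithmetic of the pairing function in `(M, 𝔛)` -/

section Pairing

/-- Doubled Cantor codes determine the diagonal: moving from diagonal `n` to `n + 1` increases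
`n(n+1)` by `2(n+1)`, which exceeds `2a` for every `a ≤ n`. -/
theorem cantor_inj_aux {R : Type} [CommSemiring R] [LinearOrder R] [IsStrictOrderedRing R]
    (h0 : ∀ a : R, 0 ≤ a) (hd : ∀ a b : R, a < b → a + 1 ≤ b) {a b c d : R}
    (h : (a + b) * (a + b + 1) + (1 + 1) * a = (c + d) * (c + d + 1) + (1 + 1) * c) :
    ¬ a + b < c + d := by
  intro hlt
  have h1 := hd _ _ hlt
  have h2 : (a + b + 1) * (a + b + 1 + 1) ≤ (c + d) * (c + d + 1) := by
    have h3 : a + b + 1 + 1 ≤ c + d + 1 := by gcongr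
    exact mul_le_mul h1 h3 (h0 _) (h0 _)
  have h3 : (c + d) * (c + d + 1) ≤ (c + d) * (c + d + 1) + (1 + 1) * c :=
    le_add_of_nonneg_right (h0 _)
  have h4 : (a + b + 1) * (a + b + 1 + 1)
      = ((a + b) * (a + b + 1) + (1 + 1) * a) + ((1 + 1) * b + (1 + 1)) := by ring
  have h5 : (0 : R) < (1 + 1) * b + (1 + 1) :=
    add_pos_of_nonneg_of_pos (h0 _) (by positivity)
  have h6 := h2.trans h3
  rw [h4, ← h] at h6
  exact absurd h6 (not_le.mpr (lt_add_of_pos_right _ h5))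

theorem cantor_inj {R : Type} [CommSemiring R] [LinearOrder R] [IsStrictOrderedRing R]
    (h0 : ∀ a : R, 0 ≤ a) (hd : ∀ a b : R, a < b → a + 1 ≤ b) {a b c d : R}
    (h : (a + b) * (a + b + 1) + (1 + 1) * a = (c + d) * (c + d + 1) + (1 + 1) * c) :
    a = c ∧ b = d := by
  have e : a + b = c + d :=
    le_antisymm (not_lt.mp (cantor_inj_aux h0 hd h.symm)) (not_lt.mp (cantor_inj_aux h0 hd h))
  rw [e] at h
  have h2 : (1 + 1) * a = (1 + 1) * c := add_left_cancel h
  have h3 : a = c := by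
    have : (0 : R) < 1 + 1 := by positivity
    exact le_antisymm (le_of_mul_le_mul_left h2.le this) (le_of_mul_le_mul_left h2.ge this)
  subst h3
  exact ⟨rfl, add_left_cancel e⟩

variable {M : Type} {S : AStr M}

/-- The commutative semiring underlying a model of `PA⁻`. -/
abbrev PAminusSem.commSemiring (h : PAminusSem S) : CommSemiring M where
  add := S.add
  zero := S.zero
  mul := S.mul
  one := S.one
  nsmul := @nsmulRec M ⟨S.zero⟩ ⟨S.add⟩
  npow := @npowRec M ⟨S.one⟩ ⟨S.mul⟩
  natCast := fun n => Nat.rec S.zero (fun _ x => S.add x S.one) n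
  natCast_zero := rfl
  natCast_succ := fun _ => rfl
  add_assoc a b c := (h.1 a b c).symm
  add_comm := h.2.1
  zero_add a := (h.2.1 _ _).trans (h.2.2.2.2.2.1 a)
  add_zero := h.2.2.2.2.2.1
  mul_assoc a b c := (h.2.2.1 a b c).symm
  mul_comm := h.2.2.2.1
  left_distrib := h.2.2.2.2.1
  right_distrib a b c := by
    change S.mul (S.add a b) c = S.add (S.mul a c) (S.mul b c)
    rw [h.2.2.2.1, h.2.2.2.2.1, h.2.2.2.1 c a, h.2.2.2.1 c b]
  zero_mul a := (h.2.2.2.1 _ _).trans (h.2.2.2.2.2.2.1 a)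
  mul_zero := h.2.2.2.2.2.2.1
  one_mul a := (h.2.2.2.1 _ _).trans (h.2.2.2.2.2.2.2.1 a)
  mul_one := h.2.2.2.2.2.2.2.1

open Classical in
/-- The linear order underlying a model of `PA⁻`. -/
noncomputable abbrev PAminusSem.linearOrder (h : PAminusSem S) : LinearOrder M where
  le := S.le
  lt := S.lt
  le_refl a := Or.inr rfl
  le_trans a b c := by
    obtain ⟨-, -, -, -, -, -, -, -, ht, -⟩ := h
    rintro (h1 | rfl) (h2 | rfl)
    · exact Or.inl (ht _ _ _ h1 h2)
    · exact Or.inl h1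
    · exact Or.inl h2
    · exact Or.inr rfl
  lt_iff_le_not_ge a b := by
    obtain ⟨-, -, -, -, -, -, -, -, ht, hi, -⟩ := h
    refine ⟨fun h1 => ⟨Or.inl h1, ?_⟩, ?_⟩
    · rintro (h2 | rfl)
      · exact hi _ (ht _ _ _ h1 h2)
      · exact hi _ h1
    · rintro ⟨h1 | rfl, h2⟩
      · exact h1
      · exact absurd (Or.inr rfl) h2
  le_antisymm a b := by
    obtain ⟨-, -, -, -, -, -, -, -, ht, hi, -⟩ := h
    rintro (h1 | rfl) (h2 | h2)
    · exact absurd (ht _ _ _ h1 h2) (hi _)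
    · exact h2.symm
    · rfl
    · rfl
  le_total a b := by
    rcases h.2.2.2.2.2.2.2.2.2.2.1 a b with h1 | rfl | h1
    · exact Or.inl (Or.inl h1)
    · exact Or.inl (Or.inr rfl)
    · exact Or.inr (Or.inl h1)
  toDecidableLE := fun _ _ => Classical.propDecidable _

theorem PAminusSem.isStrictOrderedRing (h : PAminusSem S) :
    @IsStrictOrderedRing M h.commSemiring.toSemiring h.linearOrder.toPartialOrder := by
  let := h.commSemiring
  let := h.linearOrder
  have hadd : ∀ a b c : M, a < b → a + c < b + c := h.2.2.2.2.2.2.2.2.2.2.2.1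
  have hmul : ∀ a b c : M, 0 < c → a < b → a * c < b * c := h.2.2.2.2.2.2.2.2.2.2.2.2.1
  have h01 : (0 : M) < 1 := h.2.2.2.2.2.2.2.2.2.2.2.2.2.2.1
  have hle : ∀ a b c : M, a ≤ b → a + c ≤ b + c := by
    intro a b c hab
    rcases hab.lt_or_eq with h1 | rfl
    · exact (hadd _ _ _ h1).le
    · exact le_rfl
  exact
    { add_le_add_left := fun a b hab c => hle a b c hab
      le_of_add_le_add_left := by
        intro a b c hab
        by_contra hcon
        have h1 := hadd c b a (not_le.mp hcon)
        rw [add_comm c a, add_comm b a] at h1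
        exact absurd hab (not_le.mpr h1)
      zero_le_one := h01.le
      exists_pair_ne := ⟨0, 1, h01.ne⟩
      mul_lt_mul_of_pos_left := by
        intro c hc a b hab
        have h1 := hmul a b c hc hab
        rwa [mul_comm a c, mul_comm b c] at h1
      mul_lt_mul_of_pos_right := by
        intro c hc a b hab
        exact hmul a b c hc hab }

theorem pairRel_inj (h : PAminusSem S) {p a b c d : M} (h1 : S.PairRel p a b)
    (h2 : S.PairRel p c d) : a = c ∧ b = d := by
  let := h.commSemiring
  let := h.linearOrder
  have := h.isStrictOrderedRing
  have h0 : ∀ a : M, 0 ≤ a := fun a =>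
    (h.2.2.2.2.2.2.2.2.2.2.2.2.2.2.2.2 a).elim (fun e => e ▸ le_rfl) (fun e => le_of_lt e)
  refine cantor_inj h0 ?_ (h1.symm.trans h2)
  intro a b hab
  obtain ⟨c, hc⟩ := h.2.2.2.2.2.2.2.2.2.2.2.2.2.1 a b hab
  change a + c = b at hc
  subst hc
  have hc : 0 < c := lt_of_add_lt_add_left (a := a) (by simpa using hab)
  have hc1 : (1 : M) ≤ c :=
    (h.2.2.2.2.2.2.2.2.2.2.2.2.2.2.2.1 c hc).elim (fun e => e ▸ le_rfl) (fun e => le_of_lt e)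
  gcongr

/-- Every pair has a code: `n(n+1)` is even, by induction inside `(M, 𝔛)`. -/
theorem exists_pairRel {𝔛 : Set (Set M)} (h : SatACA0 S 𝔛) (h𝔛 : 𝔛.Nonempty) (a b : M) :
    ∃ p, S.PairRel p a b := by
  obtain ⟨X, hX⟩ := h𝔛
  obtain ⟨hP, hI, hCA⟩ := h
  let := hP.commSemiring
  have key := hCA
    (.ex 1 (.eq (.mul (.add .one .one) (.var 1)) (.mul (.var 0) (.add (.var 0) .one)))) 0
    trivial (fun _ => S.zero) (fun _ => X) (fun _ => hX)
  have hev : ∀ n : M, ∃ q : M, (1 + 1) * q = n * (n + 1) := by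
    intro n
    have := hI _ key ?_ ?_ n
    · simp only [Fml.ex, Sat, not_forall, not_not, PTerm.val, Set.mem_ofPred_eq] at this
      exact this
    · simp only [Fml.ex, Sat, not_forall, not_not, PTerm.val, Set.mem_ofPred_eq]
      refine ⟨S.zero, ?_⟩
      simp only [Function.update, PTerm.val]
      change (1 + 1) * (0 : M) = 0 * (0 + 1)
      ring
    · intro a ha
      simp only [Fml.ex, Sat, not_forall, not_not, PTerm.val, Set.mem_ofPred_eq] at ha ⊢
      obtain ⟨q, hq⟩ := ha
      refine ⟨S.add q (S.add a S.one), ?_⟩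
      change (1 + 1) * q = a * (a + 1) at hq
      change (1 + 1) * (q + (a + 1)) = (a + 1) * (a + 1 + 1)
      rw [mul_add, hq]
      ring
  obtain ⟨q, hq⟩ := hev (a + b)
  refine ⟨q + a, ?_⟩
  change (1 + 1) * (q + a) = (a + b) * (a + b + 1) + (1 + 1) * a
  rw [mul_add, hq]

end Pairing

/-! ### Arithmetical definability of coded functions -/

section Coding

variable {M : Type} {S : AStr M} {𝔛 : Set (Set M)}

/-- The formula expressing `x_p = ⟨x_a, x_b⟩`. -/
def pairFml (p a b : ℕ) : Fml :=
  .eq (.mul (.add .one .one) (.var p))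
    (.add (.mul (.add (.var a) (.var b)) (.add (.add (.var a) (.var b)) .one))
      (.mul (.add .one .one) (.var a)))

/-- The formula expressing `⟨x_a, x_b⟩ ∈ X_k`; the variable `5` is bound. -/
def graphFml (k a b : ℕ) : Fml :=
  .ex 5 ((pairFml 5 a b).and (.mem (.var 5) k))

theorem sat_and {v : ℕ → M} {w : ℕ → Set M} {φ ψ : Fml} :
    Sat S 𝔛 v w (φ.and ψ) ↔ Sat S 𝔛 v w φ ∧ Sat S 𝔛 v w ψ := by
  simp [Fml.and, Sat]

theorem sat_or {v : ℕ → M} {w : ℕ → Set M} {φ ψ : Fml} :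
    Sat S 𝔛 v w (φ.or ψ) ↔ Sat S 𝔛 v w φ ∨ Sat S 𝔛 v w ψ := by
  simp [Fml.or, Sat, or_iff_not_imp_left]

theorem sat_ex {v : ℕ → M} {w : ℕ → Set M} {φ : Fml} {x : ℕ} :
    Sat S 𝔛 v w (φ.ex x) ↔ ∃ a, Sat S 𝔛 (Function.update v x a) w φ := by
  simp [Fml.ex, Sat]

theorem sat_pairFml {v : ℕ → M} {w : ℕ → Set M} {p a b : ℕ} :
    Sat S 𝔛 v w (pairFml p a b) ↔ S.PairRel (v p) (v a) (v b) := Iff.rfl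

theorem sat_graphFml {v : ℕ → M} {w : ℕ → Set M} {k a b : ℕ} (ha : a ≠ 5) (hb : b ≠ 5) :
    Sat S 𝔛 v w (graphFml k a b) ↔ v b ∈ S.SliceAt (w k) (v a) := by
  simp [graphFml, sat_ex, sat_and, sat_pairFml, Sat, PTerm.val, AStr.SliceAt,
    Function.update_of_ne ha, Function.update_of_ne hb]

/-- A function whose graph is arithmetically definable (in the variables `0`, `1`, with the
variable `2` irrelevant) is coded. -/
theorem codedFun_of_fml (h : SatACA0 S 𝔛) {φ : Fml} (hφ : φ.IsArith) (v : ℕ → M)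
    (w : ℕ → Set M) (hw : ∀ k, w k ∈ 𝔛) (g : M → M)
    (hg : ∀ p a b, g a = b ↔
      Sat S 𝔛 (Function.update (Function.update (Function.update v 2 p) 0 a) 1 b) w φ) :
    S.CodedFun 𝔛 g := by
  refine ⟨_, h.2.2 (.ex 0 (.ex 1 ((pairFml 2 0 1).and φ))) 2
    (by simpa [Fml.IsArith, Fml.ex, Fml.and, pairFml] using hφ) v w hw, fun a b => ?_⟩
  simp only [AStr.SliceAt, Set.mem_ofPred_eq, sat_ex, sat_and, sat_pairFml, ← hg]
  simp only [Function.update, eq_rec_constant]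
  constructor
  · intro e
    obtain ⟨p, hp⟩ := exists_pairRel h ⟨_, hw 0⟩ a b
    exact ⟨p, hp, a, b, hp, e⟩
  · rintro ⟨p, hp, a', b', hp', e⟩
    obtain ⟨rfl, rfl⟩ := pairRel_inj h.1 hp hp'
    exact e

theorem codedFun_const (h : SatACA0 S 𝔛) (h𝔛 : 𝔛.Nonempty) (c : M) :
    S.CodedFun 𝔛 (fun _ => c) := by
  obtain ⟨X, hX⟩ := h𝔛
  refine codedFun_of_fml h (φ := .eq (.var 1) (.var 3)) trivial (fun _ => c) (fun _ => X)
    (fun _ => hX) _ fun p a b => ?_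
  simp [Sat, PTerm.val, eq_comm]

theorem fiber_mem (h : SatACA0 S 𝔛) {f : M → M} (hf : S.CodedFun 𝔛 f) (c : M) :
    {a | f a = c} ∈ 𝔛 := by
  obtain ⟨G, hG, hGf⟩ := hf
  have key := h.2.2 (graphFml 0 0 3) 0 (by simp [Fml.IsArith, graphFml, Fml.ex, Fml.and, pairFml])
    (fun _ => c) (fun _ => G) (fun _ => hG)
  convert key using 3 with a
  rw [sat_graphFml (by decide) (by decide)]
  simp [hGf]

/-- For coded `f` and `e` with `e` injective, the partial function `e⁻¹ ∘ f`, cut off at `a`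
(where `a` serves as the default value), is coded. -/
theorem codedFun_truncInv (h : SatACA0 S 𝔛) {f e : M → M} (hf : S.CodedFun 𝔛 f)
    (he : S.CodedFun 𝔛 e) (a : M) (g : M → M)
    (hg : ∀ i b, g i = b ↔
      (S.lt b a ∧ f i = e b) ∨ (b = a ∧ ¬ ∃ c, S.lt c a ∧ f i = e c)) :
    S.CodedFun 𝔛 g := by
  obtain ⟨F, hF, hFf⟩ := hf
  obtain ⟨E, hE, hEe⟩ := he
  -- `same y` expresses `f x₀ = e x_y`, with the common value in the variable `4`.
  let same : ℕ → Fml := fun y => .ex 4 ((graphFml 0 0 4).and (graphFml 1 y 4))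
  refine codedFun_of_fml h
    (φ := ((Fml.lt (.var 1) (.var 3)).and (same 1)).or
      ((Fml.eq (.var 1) (.var 3)).and
        (.not (.ex 6 ((Fml.lt (.var 6) (.var 3)).and (same 6))))))
    (by simp [same, Fml.IsArith, graphFml, Fml.ex, Fml.and, Fml.or, pairFml])
    (fun _ => a) (fun k => if k = 0 then F else E) (fun k => by split_ifs <;> assumption)
    g fun p i b => ?_
  have hs : ∀ (v : ℕ → M) (y : ℕ), y ≠ 5 → y ≠ 4 →
      (Sat S 𝔛 v (fun k => if k = 0 then F else E) (same y) ↔ f (v 0) = e (v y)) := by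
    intro v y hy hy'
    simp only [same, sat_ex, sat_and]
    have : ∀ c, (Sat S 𝔛 (Function.update v 4 c) (fun k => if k = 0 then F else E)
        (graphFml 0 0 4) ∧ Sat S 𝔛 (Function.update v 4 c) (fun k => if k = 0 then F else E)
        (graphFml 1 y 4)) ↔ (f (v 0) = c ∧ e (v y) = c) := by
      intro c
      rw [sat_graphFml (by decide) (by decide), sat_graphFml hy (by decide)]
      simp [hFf, hEe, Function.update_of_ne hy']
    simp only [this]
    exact ⟨fun ⟨c, h1, h2⟩ => h1.trans h2.symm, fun h1 => ⟨_, rfl, h1.symm⟩⟩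
  rw [hg]
  simp only [sat_or, sat_and, Sat, sat_ex, hs _ 1 (by decide) (by decide),
    hs _ 6 (by decide) (by decide), PTerm.val]
  simp [Function.update]

end Coding

/-- Lemma: if `U` is complete then `M ⊆_e N`. Identifying `a ∈ M`
with the class of the constant function with value `j a`, `M` is an initial segment
of the restricted ultrapower `N = ∏_𝔛 K / U`. -/
theorem restricted_ultrapower_end_extension
    {M KT NT : Type} (S : AStr M) (𝔛 : Set (Set M)) (T : Set Fml) (A : Set M)
    (K : AStr KT) (j : M → KT) (K0 : AStr M) (C : Set M) (ϱ : KT → M)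
    (U : Set (Set M)) (SN : AStr NT) (π : (M → KT) → NT)
    -- the second-order structure (M,𝔛) ⊨ ACA₀
    (hACA : SatACA0 S 𝔛)
    -- T ⊇ PA is a theory coded in 𝔛 with M ⊨ Con_T
    (hSent : ∀ φ ∈ T, IsFOSentence φ) (hPA : PAax ⊆ T)
    (hA : A ∈ 𝔛) (hTcode : ∀ n : ℕ, (S.num n ∈ A ↔ n ∈ theoryCode T))
    (hCon : S.SatConTheory T)
    -- M ⊆_e K : j embeds M onto an initial segment of K
    (hjinj : Function.Injective j)
    (hj0 : j S.zero = K.zero) (hj1 : j S.one = K.one)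
    (hjadd : ∀ a b, j (S.add a b) = K.add (j a) (j b))
    (hjmul : ∀ a b, j (S.mul a b) = K.mul (j a) (j b))
    (hjlt : ∀ a b, S.lt a b ↔ K.lt (j a) (j b))
    (hjinit : ∀ (x : KT) (a : M), K.lt x (j a) → ∃ b : M, j b = x)
    -- K₀ ⊨ T has domain M and its elementary diagram is coded by C ∈ 𝔛
    (hK0T : ModelsT K0 T) (hC : C ∈ 𝔛)
    (hdiag : ∀ (φ : Fml) (l : ℕ) (v : ℕ → M), Fml.IsFO φ → φ.freeN ⊆ Finset.range l →
      (SatFO K0 v φ ↔ ∃ s p, S.SeqLen s (S.num l) ∧ (∀ i < l, S.SeqAt s (S.num i) (v i)) ∧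
        S.PairRel p (S.num (Fml.code φ)) s ∧ p ∈ C))
    -- ϱ : K ≅ K₀ is an isomorphism
    (hrbij : Function.Bijective ϱ)
    (hr0 : ϱ K.zero = K0.zero) (hr1 : ϱ K.one = K0.one)
    (hradd : ∀ a b, ϱ (K.add a b) = K0.add (ϱ a) (ϱ b))
    (hrmul : ∀ a b, ϱ (K.mul a b) = K0.mul (ϱ a) (ϱ b))
    (hrlt : ∀ a b, K.lt a b ↔ K0.lt (ϱ a) (ϱ b))
    -- ϱ ∘ j is the canonical embedding of M into K₀, and it is coded in 𝔛
    (hcan0 : ϱ (j S.zero) = K0.zero)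
    (hcansucc : ∀ a, ϱ (j (S.add a S.one)) = K0.add (ϱ (j a)) K0.one)
    (hcancod : S.CodedFun 𝔛 (fun a => ϱ (j a)))
    -- U is an ultrafilter on P_𝔛
    (hU : IsUltraOn (S.PX 𝔛) U)
    -- (NT, SN, π) realizes the restricted ultrapower N = ∏_𝔛 K / U :
    -- π maps ∏_𝔛 K (the functions f with ϱ ∘ f coded in 𝔛) onto N,
    -- identifying f and g exactly when they agree on a set in U
    (hsurj : ∀ n : NT, ∃ f : M → KT, S.CodedFun 𝔛 (fun a => ϱ (f a)) ∧ π f = n)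
    (heq : ∀ f g : M → KT, S.CodedFun 𝔛 (fun a => ϱ (f a)) →
      S.CodedFun 𝔛 (fun a => ϱ (g a)) → (π f = π g ↔ {a : M | f a = g a} ∈ U))
    (hzero : ∀ f : M → KT, S.CodedFun 𝔛 (fun a => ϱ (f a)) → (∀ a, f a = K.zero) →
      π f = SN.zero)
    (hone : ∀ f : M → KT, S.CodedFun 𝔛 (fun a => ϱ (f a)) → (∀ a, f a = K.one) →
      π f = SN.one)
    (hadd : ∀ f g h : M → KT, S.CodedFun 𝔛 (fun a => ϱ (f a)) →
      S.CodedFun 𝔛 (fun a => ϱ (g a)) → S.CodedFun 𝔛 (fun a => ϱ (h a)) →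
      (∀ a, h a = K.add (f a) (g a)) → SN.add (π f) (π g) = π h)
    (hmul : ∀ f g h : M → KT, S.CodedFun 𝔛 (fun a => ϱ (f a)) →
      S.CodedFun 𝔛 (fun a => ϱ (g a)) → S.CodedFun 𝔛 (fun a => ϱ (h a)) →
      (∀ a, h a = K.mul (f a) (g a)) → SN.mul (π f) (π g) = π h)
    (hlt : ∀ f g : M → KT, S.CodedFun 𝔛 (fun a => ϱ (f a)) →
      S.CodedFun 𝔛 (fun a => ϱ (g a)) →
      (SN.lt (π f) (π g) ↔ {a : M | K.lt (f a) (g a)} ∈ U))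
    -- U is complete
    (hcompl : S.CompleteOn 𝔛 U) :
    ∀ (x : NT) (a : M), SN.lt x (π (fun _ => j a)) → ∃ b : M, π (fun _ => j b) = x := by
  intro x a hxa
  have hne : 𝔛.Nonempty := ⟨A, hA⟩
  have hconst : ∀ c : M, S.CodedFun 𝔛 (fun _ => ϱ (j c)) := fun c => codedFun_const hACA hne _
  have hinj : Function.Injective (fun b => ϱ (j b)) := hrbij.injective.comp hjinj
  obtain ⟨f, hf, rfl⟩ := hsurj x
  have hltU := (hlt f _ hf (hconst a)).mp hxa
  obtain ⟨⟨hUP, -, -, hup, hdir⟩, -⟩ := hU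
  obtain ⟨-, -, -, -, -, -, -, -, htr, hir, -, hmono, -, -, h01, -⟩ := id hACA.1
  have haa : S.lt a (S.add a S.one) := by
    have h1 := hmono _ _ a h01
    rwa [hACA.1.2.1 S.zero, hACA.1.2.2.2.2.2.1, hACA.1.2.1] at h1
  -- `g` inverts `j` on the values of `f` below `j a` and takes the default value `a` elsewhere.
  have hex : ∀ i, ∃ b, (S.lt b a ∧ ϱ (f i) = ϱ (j b)) ∨
      (b = a ∧ ¬ ∃ c, S.lt c a ∧ ϱ (f i) = ϱ (j c)) := by
    intro i
    by_cases hc : ∃ c, S.lt c a ∧ ϱ (f i) = ϱ (j c)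
    · obtain ⟨c, hc⟩ := hc
      exact ⟨c, Or.inl hc⟩
    · exact ⟨a, Or.inr ⟨rfl, hc⟩⟩
  choose g hg using hex
  have hgc : S.CodedFun 𝔛 g := by
    refine codedFun_truncInv hACA hf hcancod a g fun i b => ⟨?_, ?_⟩
    · rintro rfl
      exact hg i
    · intro hb
      rcases hg i with ⟨h1, h2⟩ | ⟨h1, h2⟩ <;> rcases hb with ⟨h3, h4⟩ | ⟨h3, h4⟩
      · exact hinj (h2.symm.trans h4)
      · exact absurd ⟨_, h1, h2⟩ h4
      · exact absurd ⟨_, h3, h4⟩ h2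
      · exact h1.trans h3.symm
  obtain ⟨B, hB, hBc⟩ := hcompl g hgc ⟨S.add a S.one, fun i => by
    rcases hg i with ⟨h1, -⟩ | ⟨h1, -⟩
    · exact htr _ _ _ h1 haa
    · rwa [h1]⟩
  obtain ⟨D, hD, hD1, hD2⟩ := hdir _ hltU _ hB
  have hval : ∀ i ∈ D, f i = j (g i) := by
    intro i hi
    rcases hg i with ⟨-, h2⟩ | ⟨-, h2⟩
    · exact hrbij.injective h2
    · have h3 : K.lt (f i) (j a) := hD1 hi
      obtain ⟨c, hc⟩ := hjinit _ _ h3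
      rw [← hc] at h3
      exact absurd ⟨c, (hjlt _ _).mpr h3, by rw [hc]⟩ h2
  obtain ⟨d, hd, -⟩ := (hUP hD).2 S.zero
  refine ⟨g d, (heq _ _ (hconst _) hf).mpr ?_⟩
  have hsub : D ⊆ {i | j (g d) = f i} := fun i hi => by
    rw [Set.mem_ofPred_eq, hval i hi, hBc i (hD2 hi) d (hD2 hd)]
  refine hup D hD _ ⟨?_, fun b => ?_⟩ hsub
  · have := fiber_mem hACA hf (ϱ (j (g d)))
    convert this using 3
    exact ⟨fun e => by rw [e], fun e => (hrbij.injective e).symm⟩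
  · obtain ⟨i, hi, hbi⟩ := (hUP hD).2 b
    exact ⟨i, hsub hi, hbi⟩

end Paper
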